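/- Let ρ be a density operator on ℂ^d with eigenvalue vector r, and let S be a closed set of probability vectors on d points not containing r. With P_X the sum of Schur–Weyl projectors P_λ over partitions λ of k with λ/k ∈ S, one has tr(P_X ρ^{⊗k}) ≤ (k+1)^{d(d+1)/2} exp(−k · min_{λ ⊢ k, λ̄ ∈ S} D(λ̄||r)). -/

import Mathlib

open Matrix Finset Nat ComplexOrder

noncomputable section

/-- The cells of the Young diagram of `lam` (rows indexed `0, …, d−1`). -/
def youngCells (d k : ℕ) (lam : ℕ → ℕ) : Finset (ℕ × ℕ) :=
  (range d ×ˢ range k).filter fun c => c.2 < lam c.1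

/-- The matrix of the action of the permutation `π ∈ S_k` on `(ℂ^d)^{⊗k}`, permuting
the tensor factors: basis vectors are indexed by functions `Fin k → Fin d`. -/
def permMat (d k : ℕ) (π : Equiv.Perm (Fin k)) :
    Matrix (Fin k → Fin d) (Fin k → Fin d) ℂ :=
  Matrix.of fun v w => if v = w ∘ ⇑π⁻¹ then 1 else 0

/-- The Young symmetry operator `e(T)` of a tableau, acting on `(ℂ^d)^{⊗k}`:
the signed sum over the column group times the sum over the row group, where the tableau is
given as a numbering `t : Fin k → ℕ × ℕ` of the boxes. -/
def youngSymMat (d k : ℕ) (t : Fin k → ℕ × ℕ) :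
    Matrix (Fin k → Fin d) (Fin k → Fin d) ℂ :=
  (∑ π ∈ univ.filter (fun π : Equiv.Perm (Fin k) => ∀ j, (t (π j)).2 = (t j).2),
      (((Equiv.Perm.sign π : ℤ) : ℂ) • permMat d k π)) *
    ∑ π ∈ univ.filter (fun π : Equiv.Perm (Fin k) => ∀ j, (t (π j)).1 = (t j).1),
      permMat d k π

/-- The `lam`-isotypic component `U_lam ⊗ V_lam` of `(ℂ^d)^{⊗k}` in the Schur–Weyl
decomposition: the span of the `S_k`-translates of the images of the Young symmetry
operators of tableaux of shape `lam`. -/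
def isotypic (d k : ℕ) (lam : ℕ → ℕ) : Submodule ℂ ((Fin k → Fin d) → ℂ) :=
  Submodule.span ℂ {x | ∃ t : Fin k → ℕ × ℕ,
    Set.BijOn t Set.univ ↑(youngCells d k lam) ∧
    ∃ (π : Equiv.Perm (Fin k)) (v : (Fin k → Fin d) → ℂ),
      x = (permMat d k π).mulVec ((youngSymMat d k t).mulVec v)}

/-- The `k`-fold tensor power `ρ^{⊗k}` of a matrix `ρ` on `ℂ^d`. -/
def tensorPow (d k : ℕ) (ρ : Matrix (Fin d) (Fin d) ℂ) :
    Matrix (Fin k → Fin d) (Fin k → Fin d) ℂ :=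
  Matrix.of fun v w => ∏ j, ρ (v j) (w j)

open scoped Classical

/-!
Conjugating the projectors by `U^{⊗k}`, which preserves the isotypic components, reduces to a
diagonal `ρ`. Its tensor power then acts on the component of `lam` with eigenvalues at most
`∏ i, r i ^ lam i` (the highest weight), so `tr(P_lam ρ^{⊗k})` is at most this product times the
dimension of the component.

That dimension is bounded through the Young symmetrizer of a single tableau. The images of its
range under rearrangements of the row word span the component, and the probability vector
`q = lam / k` gives each of these rearrangements probability `∏ i, q i ^ lam i`, so there are at
most the inverse of that number of them; the quotient of the two products is `exp(-k D(q‖r))`.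
The range itself has polynomial dimension: by polarization it is spanned by the antisymmetrized
product vectors made of the rows of a matrix `x`. On the dense set of products `x = L * U`, with
`L` lower triangular and `U` upper unitriangular, the antisymmetrizer sees `L` only through a
scalar, which leaves at most `(k+1)^{d(d-1)/2}` monomials in the entries of `U` above the
diagonal.
-/

section LowerUpperProducts

variable {𝕜 : Type*} {n : ℕ}

/-- Upper unitriangular matrices: upper triangular with ones on the diagonal. -/
def IsUpperUnitriangular {α R : Type*} [LT α] [Zero R] [One R] (U : Matrix α α R) : Prop :=
  U.BlockTriangular id ∧ ∀ i, U i i = 1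

/-- The matrices with a factorization into a lower triangular matrix (encoded as block triangular
for the reversed order) and an upper unitriangular one. -/
def lowerUpperProducts (𝕜 : Type*) (n : ℕ) [Semiring 𝕜] : Set (Matrix (Fin n) (Fin n) 𝕜) :=
  {x | ∃ L U : Matrix (Fin n) (Fin n) 𝕜,
    L.BlockTriangular OrderDual.toDual ∧ IsUpperUnitriangular U ∧ L * U = x}

theorem mul_mem_lowerUpperProducts [Semiring 𝕜] {L x : Matrix (Fin n) (Fin n) 𝕜}
    (hL : L.BlockTriangular OrderDual.toDual) (hx : x ∈ lowerUpperProducts 𝕜 n) :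
    L * x ∈ lowerUpperProducts 𝕜 n := by
  obtain ⟨L', U, hL', hU, rfl⟩ := hx
  exact ⟨L * L', U, hL.mul hL', hU, mul_assoc ..⟩

/-- One step of Gaussian elimination with pivot `x c c`. -/
theorem exists_lower_mul_eq_of_pivot_ne_zero {α : Type*} [Fintype α] [LinearOrder α] [Field 𝕜]
    (x : Matrix α α 𝕜) {c : α} (hc : x c c ≠ 0) :
    ∃ L z : Matrix α α 𝕜, L.BlockTriangular OrderDual.toDual ∧ L * z = x ∧ z c c = 1 ∧
      (∀ i, c < i → z i c = 0) ∧ ∀ a, x c a = 0 → ∀ i, z i a = x i a := by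
  let u : α → 𝕜 := fun i => if c < i then x i c else if i = c then x c c - 1 else 0
  let p : α → 𝕜 := fun a => x c a / x c c
  have hpivot : (x - vecMulVec u p).row c = p := by
    ext a
    simp only [row_apply, Matrix.sub_apply, vecMulVec_apply, u, p, lt_irrefl, if_false, if_true]
    field_simp
    ring
  refine ⟨1 + vecMulVec u (Pi.single c 1), x - vecMulVec u p, ?_, ?_, ?_, ?_, ?_⟩
  · refine blockTriangular_one.add fun i a hia => ?_
    obtain rfl | ha := eq_or_ne a c
    · simp [vecMulVec_apply, u, (OrderDual.toDual_lt_toDual.mp hia).not_gt,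
        (OrderDual.toDual_lt_toDual.mp hia).ne]
    · simp [vecMulVec_apply, ha]
  · rw [add_mul, one_mul, vecMulVec_mul, single_one_vecMul, hpivot, sub_add_cancel]
  · exact (congrFun hpivot c).trans (div_self hc)
  · intro i hi
    simp [vecMulVec_apply, u, p, hi, hc]
  · intro a ha i
    simp [vecMulVec_apply, p, ha]

variable [NontriviallyNormedField 𝕜]

theorem mem_closure_image_add_single (x : Matrix (Fin n) (Fin n) 𝕜) (c : Fin n) :
    x ∈ closure ((fun s : 𝕜 => x + single c c s) '' {0}ᶜ) := by
  have hcont : Continuous fun s : 𝕜 => x + single c c s := by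
    refine continuous_const.add (continuous_matrix fun i a => ?_)
    simp only [single_apply]
    split_ifs <;> fun_prop
  have h := image_closure_subset_closure_image hcont
    (Set.mem_image_of_mem _ (dense_compl_singleton (0 : 𝕜) 0))
  simpa using h

theorem mem_closure_lowerUpperProducts {m : ℕ} (hm : m ≤ n) {x : Matrix (Fin n) (Fin n) 𝕜}
    (hx : ∀ a : Fin n, (a : ℕ) < m → x a a = 1 ∧ ∀ i, a < i → x i a = 0) :
    x ∈ closure (lowerUpperProducts 𝕜 n) := by
  induction hm using Nat.decreasingInduction generalizing x with
  | self =>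
    exact subset_closure ⟨1, x, blockTriangular_one,
      ⟨fun i a h => (hx a a.2).2 i h, fun a => (hx a a.2).1⟩, one_mul x⟩
  | of_succ m hm ih =>
    let c : Fin n := ⟨m, hm⟩
    have pivot {y : Matrix (Fin n) (Fin n) 𝕜} (hyc : y c c ≠ 0)
        (hy : ∀ a < c, y a a = 1 ∧ ∀ i, a < i → y i a = 0) :
        y ∈ closure (lowerUpperProducts 𝕜 n) := by
      obtain ⟨L, z, hL, rfl, hzc, hcol, hold⟩ := exists_lower_mul_eq_of_pivot_ne_zero y hyc
      have hz : z ∈ closure (lowerUpperProducts 𝕜 n) := by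
        refine ih fun a ha => ?_
        obtain rfl | hac := eq_or_ne a c
        · exact ⟨hzc, hcol⟩
        have hlt : a < c := lt_of_le_of_ne (Nat.lt_succ_iff.mp ha) hac
        have hkeep := hold a ((hy a hlt).2 c hlt)
        simpa only [hkeep] using hy a hlt
      exact map_mem_closure (continuous_const.matrix_mul continuous_id) hz
        fun _ => mul_mem_lowerUpperProducts hL
    by_cases hxc : x c c = 0
    · refine closure_minimal ?_ isClosed_closure (mem_closure_image_add_single x c)
      rintro _ ⟨s, hs, rfl⟩
      refine pivot (by simpa [hxc] using hs) fun a ha => ?_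
      simpa [single_apply, ha.ne'] using hx a ha
    · exact pivot hxc hx

theorem dense_lowerUpperProducts : Dense (lowerUpperProducts 𝕜 n) := fun _ =>
  mem_closure_lowerUpperProducts n.zero_le fun _ ha => absurd ha (Nat.not_lt_zero _)

end LowerUpperProducts

section PermutationAction

variable {d k : ℕ} {κ : Type*}

theorem permMat_mulVec_apply (π : Equiv.Perm (Fin k)) (x : (Fin k → Fin d) → ℂ)
    (w : Fin k → Fin d) : (permMat d k π *ᵥ x) w = x (w ∘ π) := by
  have h (w' : Fin k → Fin d) : w = w' ∘ ⇑π.symm ↔ w ∘ π = w' :=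
    Equiv.eq_comp_symm π w w'
  simp [permMat, mulVec, dotProduct, h]

theorem permMat_mul (π σ : Equiv.Perm (Fin k)) :
    permMat d k (π * σ) = permMat d k π * permMat d k σ := by
  refine ext_iff_mulVec.mpr fun x => ?_
  ext w
  simp only [← mulVec_mulVec, permMat_mulVec_apply, Equiv.Perm.coe_mul, Function.comp_assoc]

theorem permMat_one : permMat d k 1 = 1 := by
  refine ext_iff_mulVec.mpr fun x => ?_
  ext w
  rw [permMat_mulVec_apply, one_mulVec, Equiv.Perm.coe_one, Function.comp_id]

/-- The permutations preserving the fibres of `c`; for `c` the row or column function of a tableau,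
its row or column group. -/
def fiberPerms (c : Fin k → κ) : Subgroup (Equiv.Perm (Fin k)) where
  carrier := {π | ∀ j, c (π j) = c j}
  mul_mem' hπ hσ j := (hπ _).trans (hσ j)
  one_mem' _ := rfl
  inv_mem' {π} hπ j := by simpa using (hπ (π⁻¹ j)).symm

theorem mem_fiberPerms {c : Fin k → κ} {π : Equiv.Perm (Fin k)} :
    π ∈ fiberPerms c ↔ ∀ j, c (π j) = c j := Iff.rfl

theorem swap_mem_fiberPerms {c : Fin k → κ} {a b : Fin k} (h : c a = c b) :
    Equiv.swap a b ∈ fiberPerms c := fun j => by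
  rw [Equiv.swap_apply_def]
  split_ifs with ha hb
  · rw [ha, h]
  · rw [hb, h]
  · rfl

/-- The operator on `(ℂ^d)^{⊗k}` symmetrizing over the permutations that preserve the fibres
of `c` (not normalized by the order of the group). -/
def symmetrizer (d : ℕ) (c : Fin k → κ) : Matrix (Fin k → Fin d) (Fin k → Fin d) ℂ :=
  ∑ π : fiberPerms c, permMat d k π

/-- The operator on `(ℂ^d)^{⊗k}` antisymmetrizing over the permutations that preserve the fibres
of `c` (not normalized by the order of the group). -/
def alternator (d : ℕ) (c : Fin k → κ) : Matrix (Fin k → Fin d) (Fin k → Fin d) ℂ :=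
  ∑ π : fiberPerms c, (((Equiv.Perm.sign (π : Equiv.Perm (Fin k)) : ℤ) : ℂ) • permMat d k π)

theorem youngSymMat_eq_alternator_mul_symmetrizer (row : Fin k → Fin d) (col : Fin k → ℕ) :
    youngSymMat d k (fun j => (row j, col j)) = alternator d col * symmetrizer d row := by
  unfold youngSymMat alternator symmetrizer
  congr 1 <;> exact Finset.sum_subtype _ (by simp [mem_fiberPerms, Fin.val_inj]) _

theorem permMat_mul_symmetrizer {c : Fin k → κ} {τ : Equiv.Perm (Fin k)} (hτ : τ ∈ fiberPerms c) :
    permMat d k τ * symmetrizer d c = symmetrizer d c := by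
  simp_rw [symmetrizer, Finset.mul_sum, ← permMat_mul]
  exact Equiv.sum_comp (Equiv.mulLeft (⟨τ, hτ⟩ : fiberPerms c)) fun π => permMat d k π

theorem sign_smul_permMat_mul (τ π : Equiv.Perm (Fin k)) :
    ((Equiv.Perm.sign (τ * π) : ℤ) : ℂ) • permMat d k (τ * π) =
      ((Equiv.Perm.sign τ : ℤ) : ℂ) • permMat d k τ *
        ((Equiv.Perm.sign π : ℤ) : ℂ) • permMat d k π := by
  rw [smul_mul_smul_comm, permMat_mul, Equiv.Perm.sign_mul, Units.val_mul, Int.cast_mul]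

theorem sign_smul_permMat_mul_alternator {c : Fin k → κ} {τ : Equiv.Perm (Fin k)}
    (hτ : τ ∈ fiberPerms c) :
    ((Equiv.Perm.sign τ : ℤ) : ℂ) • permMat d k τ * alternator d c = alternator d c := by
  simp_rw [alternator, Finset.mul_sum, ← sign_smul_permMat_mul]
  exact Equiv.sum_comp (Equiv.mulLeft (⟨τ, hτ⟩ : fiberPerms c))
    fun π => ((Equiv.Perm.sign (π : Equiv.Perm (Fin k)) : ℤ) : ℂ) • permMat d k π

theorem alternator_mul_sign_smul_permMat {c : Fin k → κ} {τ : Equiv.Perm (Fin k)}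
    (hτ : τ ∈ fiberPerms c) :
    alternator d c * ((Equiv.Perm.sign τ : ℤ) : ℂ) • permMat d k τ = alternator d c := by
  simp_rw [alternator, Finset.sum_mul, ← sign_smul_permMat_mul]
  exact Equiv.sum_comp (Equiv.mulRight (⟨τ, hτ⟩ : fiberPerms c))
    fun π => ((Equiv.Perm.sign (π : Equiv.Perm (Fin k)) : ℤ) : ℂ) • permMat d k π

theorem alternator_mulVec_apply_eq_zero {c : Fin k → κ} {w : Fin k → Fin d}
    (h : ¬ Function.Injective fun j => (w j, c j)) (x : (Fin k → Fin d) → ℂ) :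
    (alternator d c *ᵥ x) w = 0 := by
  obtain ⟨a, b, hwc, hab⟩ := Function.not_injective_iff.mp h
  obtain ⟨hw, hc⟩ := Prod.mk.inj hwc
  have hswap : w ∘ Equiv.swap a b = w := funext (swap_mem_fiberPerms hw)
  have hneg := congrArg (fun A => (A *ᵥ x) w)
    (sign_smul_permMat_mul_alternator (d := d) (swap_mem_fiberPerms hc))
  simp only [← mulVec_mulVec, smul_mulVec, Pi.smul_apply, permMat_mulVec_apply, hswap,
    Equiv.Perm.sign_swap hab] at hneg
  simpa [neg_eq_self] using hneg

theorem alternator_mulVec_eq_zero {c : Fin k → κ} {a b : Fin k} (hab : a ≠ b) (hc : c a = c b)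
    {x : (Fin k → Fin d) → ℂ} (hx : permMat d k (Equiv.swap a b) *ᵥ x = x) :
    alternator d c *ᵥ x = 0 := by
  have h := congrArg (· *ᵥ x)
    (alternator_mul_sign_smul_permMat (d := d) (swap_mem_fiberPerms hc))
  simp only [← mulVec_mulVec, smul_mulVec, hx, Equiv.Perm.sign_swap hab, mulVec_smul] at h
  simpa [neg_eq_self] using h

/-- Relabelling the boxes conjugates the group of permutations preserving the fibres. -/
def fiberPermsCompEquiv (c : Fin k → κ) (e : Equiv.Perm (Fin k)) :
    fiberPerms (c ∘ e) ≃ fiberPerms c where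
  toFun π := ⟨e * π * e⁻¹, fun j => by simpa using π.2 (e⁻¹ j)⟩
  invFun π := ⟨e⁻¹ * π * e, fun j => by simpa using π.2 (e j)⟩
  left_inv π := by simp [mul_assoc]
  right_inv π := by simp [mul_assoc]

theorem symmetrizer_comp (c : Fin k → κ) (e : Equiv.Perm (Fin k)) :
    symmetrizer d (c ∘ e) = permMat d k e⁻¹ * symmetrizer d c * permMat d k e := by
  simp_rw [symmetrizer, Finset.mul_sum, Finset.sum_mul, ← permMat_mul]
  refine Fintype.sum_equiv (fiberPermsCompEquiv c e) _ _ fun π => ?_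
  simp [fiberPermsCompEquiv, mul_assoc]

theorem alternator_comp (c : Fin k → κ) (e : Equiv.Perm (Fin k)) :
    alternator d (c ∘ e) = permMat d k e⁻¹ * alternator d c * permMat d k e := by
  simp_rw [alternator, Finset.mul_sum, Finset.sum_mul, mul_smul_comm, smul_mul_assoc,
    ← permMat_mul]
  refine Fintype.sum_equiv (fiberPermsCompEquiv c e) _ _ fun π => ?_
  have hsign : Equiv.Perm.sign (e * π.1 * e⁻¹) = Equiv.Perm.sign π.1 := by
    rw [map_mul, map_mul, map_inv, mul_inv_cancel_comm]
  simp only [fiberPermsCompEquiv, Equiv.coe_fn_mk, hsign]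
  simp [mul_assoc]

end PermutationAction

section TensorPower

variable {d k : ℕ} {κ : Type*}

theorem tensorPow_mul (A B : Matrix (Fin d) (Fin d) ℂ) :
    tensorPow d k (A * B) = tensorPow d k A * tensorPow d k B := by
  ext v w
  simp [tensorPow, mul_apply, Finset.prod_univ_sum, Finset.prod_mul_distrib]

theorem tensorPow_apply_eq_zero {A : Matrix (Fin d) (Fin d) ℂ} {v w : Fin k → Fin d} {j : Fin k}
    (h : A (v j) (w j) = 0) : tensorPow d k A v w = 0 :=
  Finset.prod_eq_zero (Finset.mem_univ j) h

theorem tensorPow_diagonal (a : Fin d → ℂ) :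
    tensorPow d k (diagonal a) = diagonal fun v => ∏ j, a (v j) := by
  ext v w
  by_cases h : v = w
  · simp [h, tensorPow]
  · obtain ⟨j, hj⟩ := Function.ne_iff.mp h
    rw [diagonal_apply_ne _ h, tensorPow_apply_eq_zero (diagonal_apply_ne _ hj)]

theorem tensorPow_one : tensorPow d k 1 = 1 := by
  simp [← diagonal_one, tensorPow_diagonal]

theorem conjTranspose_tensorPow (A : Matrix (Fin d) (Fin d) ℂ) :
    (tensorPow d k A)ᴴ = tensorPow d k Aᴴ := by
  ext v w
  simp [tensorPow]

theorem continuous_tensorPow : Continuous (tensorPow d k) := by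
  refine continuous_matrix fun v w => ?_
  simp only [tensorPow, of_apply]
  fun_prop

theorem tensorPow_apply_comp (A : Matrix (Fin d) (Fin d) ℂ) (π : Equiv.Perm (Fin k))
    (v w : Fin k → Fin d) : tensorPow d k A (v ∘ π) (w ∘ π) = tensorPow d k A v w :=
  Equiv.prod_comp π fun j => A (v j) (w j)

theorem commute_tensorPow_permMat (A : Matrix (Fin d) (Fin d) ℂ) (π : Equiv.Perm (Fin k)) :
    Commute (tensorPow d k A) (permMat d k π) := by
  refine ext_iff_mulVec.mpr fun x => ?_
  ext w
  rw [← mulVec_mulVec, ← mulVec_mulVec, permMat_mulVec_apply]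
  refine Fintype.sum_equiv (π.arrowCongr (Equiv.refl _)).symm _ _ fun u => ?_
  change _ * _ = tensorPow d k A (w ∘ π) (u ∘ π) * x (u ∘ π)
  rw [tensorPow_apply_comp, permMat_mulVec_apply]

theorem commute_tensorPow_youngSymMat (A : Matrix (Fin d) (Fin d) ℂ) (t : Fin k → ℕ × ℕ) :
    Commute (tensorPow d k A) (youngSymMat d k t) := by
  have hperm := commute_tensorPow_permMat (k := k) A
  exact (Commute.sum_right _ _ _ fun π _ => (hperm π).smul_right _).mul_right
    (Commute.sum_right _ _ _ fun π _ => hperm π)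

theorem permMat_mulVec_tensorPow_row (A : Matrix (Fin d) (Fin d) ℂ) {f : Fin k → Fin d}
    {π : Equiv.Perm (Fin k)} (hπ : π ∈ fiberPerms f) :
    permMat d k π *ᵥ (tensorPow d k A).row f = (tensorPow d k A).row f := by
  ext w
  have hf : f ∘ π = f := funext hπ
  nth_rw 1 [permMat_mulVec_apply, row_apply, ← hf]
  exact tensorPow_apply_comp A π f w

theorem alternator_mulVec_tensorPow_row_eq_zero (A : Matrix (Fin d) (Fin d) ℂ) {c : Fin k → κ}
    {f : Fin k → Fin d} (h : ¬ Function.Injective fun j => (f j, c j)) :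
    alternator d c *ᵥ (tensorPow d k A).row f = 0 := by
  obtain ⟨a, b, hfc, hab⟩ := Function.not_injective_iff.mp h
  obtain ⟨hf, hc⟩ := Prod.mk.inj hfc
  exact alternator_mulVec_eq_zero hab hc (permMat_mulVec_tensorPow_row A (swap_mem_fiberPerms hf))

theorem tensorPow_mul_row (A B : Matrix (Fin d) (Fin d) ℂ) (f : Fin k → Fin d) :
    (tensorPow d k (A * B)).row f = ∑ g, tensorPow d k A f g • (tensorPow d k B).row g := by
  ext w
  simp [tensorPow_mul, mul_apply]

end TensorPower

section FiberCard

variable {ι α : Type*} [Fintype ι]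

/-- The number of times the letter `a` occurs in the word `f`. -/
def fiberCard (f : ι → α) (a : α) : ℕ := #{j | f j = a}

theorem fiberCard_le (f : ι → α) (a : α) : fiberCard f a ≤ Fintype.card ι :=
  Finset.card_le_univ _

theorem fiberCard_eq_zero_of_forall_ne {f : ι → α} {a : α} (h : ∀ j, f j ≠ a) :
    fiberCard f a = 0 :=
  Finset.card_eq_zero.mpr (Finset.filter_eq_empty_iff.mpr fun j _ => h j)

theorem fiberCard_comp_perm (f : ι → α) (e : Equiv.Perm ι) : fiberCard (f ∘ e) = fiberCard f :=
  funext fun _ => Finset.card_equiv e (by simp)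

theorem exists_perm_comp_eq_of_fiberCard_eq {f g : ι → α} (h : fiberCard f = fiberCard g) :
    ∃ e : Equiv.Perm ι, g ∘ e = f := by
  have hfiber (a : α) : Nonempty ({j // f j = a} ≃ {j // g j = a}) := by
    refine ⟨Fintype.equivOfCardEq ?_⟩
    simpa only [Fintype.card_subtype, fiberCard] using congrFun h a
  exact ⟨Equiv.ofFiberEquiv fun a => (hfiber a).some, funext (Equiv.ofFiberEquiv_map _)⟩

theorem prod_comp_eq_prod_pow_fiberCard [Fintype α] {M : Type*} [CommMonoid M] (g : α → M)
    (f : ι → α) : ∏ j, g (f j) = ∏ a, g a ^ fiberCard f a := by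
  simp only [← Finset.prod_fiberwise' univ f g, Finset.prod_const, fiberCard]

/-- The words with the same letters as `f`, in any order. -/
def rearrangements [Fintype α] (f : ι → α) : Finset (ι → α) := {g | fiberCard g = fiberCard f}

/-- `∏ j, q (f j)` is the probability of each rearrangement of `f` as a sequence of independent
letters with distribution `q`. -/
theorem card_rearrangements_mul_prod_le_one [Fintype α] (f : ι → α) {q : α → ℝ}
    (hq : ∀ a, 0 ≤ q a) (hq_sum : ∑ a, q a = 1) :
    (#(rearrangements f) : ℝ) * ∏ j, q (f j) ≤ 1 :=
  calc (#(rearrangements f) : ℝ) * ∏ j, q (f j)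
    _ = ∑ g ∈ rearrangements f, ∏ j, q (g j) := by
      rw [← nsmul_eq_mul, Finset.sum_eq_card_nsmul]
      intro g hg
      rw [prod_comp_eq_prod_pow_fiberCard, (Finset.mem_filter.mp hg).2,
        ← prod_comp_eq_prod_pow_fiberCard]
    _ ≤ ∑ g : ι → α, ∏ j, q (g j) :=
      Finset.sum_le_univ_sum_of_nonneg fun g => Finset.prod_nonneg fun j _ => hq (g j)
    _ = ∏ _j : ι, ∑ a, q a := (Fintype.prod_sum fun _ => q).symm
    _ = 1 := by simp [hq_sum]

end FiberCard

/-- Dually: a polynomial that vanishes at every point has vanishing coefficients. -/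
theorem mem_span_range_prod_pow {K β σ : Type*} [Field K] [Infinite K] [Finite β] [Fintype σ]
    (e : β → σ → ℕ) {z : β → K} (hz : ∀ b b', e b = e b' → z b = z b') :
    z ∈ Submodule.span K (Set.range fun (y : σ → K) b => ∏ s, y s ^ e b s) := by
  cases nonempty_fintype β
  by_contra hmem
  obtain ⟨ℓ, hℓz, hℓ⟩ := Submodule.exists_le_ker_of_notMem hmem
  have hℓ_apply (v : β → K) : ℓ v = ∑ b, ℓ (Pi.single b 1) * v b := by
    nth_rw 1 [pi_eq_sum_univ' v]
    simp [mul_comm]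
  let exponent (b : β) : σ →₀ ℕ := Finsupp.equivFunOnFinite.symm (e b)
  let p : MvPolynomial σ K := ∑ b, MvPolynomial.monomial (exponent b) (ℓ (Pi.single b 1))
  have hp : p = 0 := MvPolynomial.funext fun y => by
    have hy : ℓ (fun b => ∏ s, y s ^ e b s) = 0 := hℓ (Submodule.subset_span ⟨y, rfl⟩)
    rw [hℓ_apply] at hy
    simpa [p, exponent, MvPolynomial.eval_monomial, Finsupp.prod_fintype] using hy
  have hfiber (n : σ → ℕ) : ∑ b with e b = n, ℓ (Pi.single b 1) = 0 := by
    have hn := congrArg (MvPolynomial.coeff (Finsupp.equivFunOnFinite.symm n)) hp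
    simpa [p, exponent, MvPolynomial.coeff_sum, MvPolynomial.coeff_monomial, Finset.sum_filter]
      using hn
  apply hℓz
  rw [hℓ_apply, ← Finset.sum_fiberwise_of_maps_to (t := univ.image e) (g := e) (by simp)]
  refine Finset.sum_eq_zero fun n hn => ?_
  obtain ⟨b₀, -, rfl⟩ := Finset.mem_image.mp hn
  have hconst : ∀ b ∈ ({b | e b = e b₀} : Finset β),
      ℓ (Pi.single b 1) * z b = ℓ (Pi.single b 1) * z b₀ := fun b hb => by
    rw [hz b b₀ (Finset.mem_filter.mp hb).2]
  rw [Finset.sum_congr rfl hconst, ← Finset.sum_mul, hfiber, zero_mul]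

section YoungTableau

/-- Abstract Young tableaux: `row j` and `col j` are the row and the column of the box carrying the
label `j`; no two boxes coincide, and above every box of a column all boxes are present. -/
structure IsYoungTableau {ι α κ : Type*} [LT α] (row : ι → α) (col : ι → κ) : Prop where
  injective : Function.Injective fun j => (row j, col j)
  exists_row_eq : ∀ j, ∀ m < row j, ∃ j', row j' = m ∧ col j' = col j

/-- Going down each column, the boxes above force `v j = row j`. -/
theorem IsYoungTableau.eq_of_le {ι α κ : Type*} [LinearOrder α] [WellFoundedLT α] {row : ι → α}
    {col : ι → κ} (h : IsYoungTableau row col) {v : ι → α} (hle : v ≤ row)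
    (hv : Function.Injective fun j => (v j, col j)) : v = row := by
  suffices key : ∀ a j, row j = a → v j = row j from funext fun j => key _ j rfl
  intro a
  induction a using WellFoundedLT.induction with
  | ind a ih =>
    rintro j rfl
    by_contra hne
    have hlt : v j < row j := lt_of_le_of_ne (hle j) hne
    obtain ⟨j', hrow, hcol⟩ := h.exists_row_eq j _ hlt
    have hv' : v j' = v j := (ih (row j') (hrow ▸ hlt) j' rfl).trans hrow
    obtain rfl : j' = j := hv (Prod.ext hv' hcol)
    exact hne hrow.symm

end YoungTableau

section YoungSymmetrizer

variable {d k : ℕ} {κ : Type*} {row : Fin k → Fin d} {col : Fin k → κ}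

theorem tensorPow_apply_eq_zero_of_lower {L : Matrix (Fin d) (Fin d) ℂ}
    (hL : L.BlockTriangular OrderDual.toDual) {f g : Fin k → Fin d} (h : ¬ g ≤ f) :
    tensorPow d k L f g = 0 := by
  simp only [Pi.le_def, not_forall, not_le] at h
  obtain ⟨j, hj⟩ := h
  exact tensorPow_apply_eq_zero (hL (OrderDual.toDual_lt_toDual.mpr hj))

/-- Every term of `tensorPow_mul_row` but one dies: by triangularity or by antisymmetry. -/
theorem alternator_mulVec_tensorPow_lower_mul_row (h : IsYoungTableau row col)
    {L : Matrix (Fin d) (Fin d) ℂ} (hL : L.BlockTriangular OrderDual.toDual)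
    (B : Matrix (Fin d) (Fin d) ℂ) :
    alternator d col *ᵥ (tensorPow d k (L * B)).row row =
      tensorPow d k L row row • alternator d col *ᵥ (tensorPow d k B).row row := by
  rw [tensorPow_mul_row, mulVec_sum, Finset.sum_eq_single row, mulVec_smul]
  · intro g _ hne
    rw [mulVec_smul]
    by_cases hle : g ≤ row
    · rw [alternator_mulVec_tensorPow_row_eq_zero B fun hg => hne (h.eq_of_le hle hg), smul_zero]
    · rw [tensorPow_apply_eq_zero_of_lower hL hle, zero_smul]
  · exact fun hnot => absurd (Finset.mem_univ row) hnot

/-- The span of the product vectors `⨂ⱼ U_{f j}` built from the rows of upper unitriangular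
matrices `U`. -/
def unitriangularRowSpan (f : Fin k → Fin d) : Submodule ℂ ((Fin k → Fin d) → ℂ) :=
  Submodule.span ℂ {x | ∃ U, IsUpperUnitriangular U ∧ (tensorPow d k U).row f = x}

theorem tensorPow_apply_of_isUpperUnitriangular {U : Matrix (Fin d) (Fin d) ℂ}
    (hU : IsUpperUnitriangular U) (f w : Fin k → Fin d) :
    tensorPow d k U f w = if f ≤ w then
      ∏ p : {p : Fin d × Fin d // p.1 < p.2}, U p.1.1 p.1.2 ^ fiberCard (fun j => (f j, w j)) p.1
      else 0 := by
  split_ifs with hfw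
  · have hprod := prod_comp_eq_prod_pow_fiberCard (fun p : Fin d × Fin d => U p.1 p.2)
      (fun j => (f j, w j))
    refine hprod.trans ?_
    rw [← Finset.prod_filter_of_ne (p := fun p : Fin d × Fin d => p.1 < p.2),
      ← Finset.prod_subtype_eq_prod_filter, Finset.subtype_univ]
    rintro ⟨a, b⟩ - hne
    contrapose! hne
    obtain (rfl : b = a) | hba := hne.eq_or_lt
    · rw [hU.2, one_pow]
    · rw [fiberCard_eq_zero_of_forall_ne, pow_zero]
      rintro j hj
      obtain ⟨rfl, rfl⟩ := Prod.mk.inj hj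
      exact hba.not_ge (hfw j)
  · simp only [Pi.le_def, not_forall, not_le] at hfw
    obtain ⟨j, hj⟩ := hfw
    exact tensorPow_apply_eq_zero (hU.1 hj)

theorem card_lt_pairs (d : ℕ) :
    Fintype.card {p : Fin d × Fin d // p.1 < p.2} = d * (d - 1) / 2 := by
  have hbelow (b : Fin d) : ∑ a : Fin d, (if a < b then 1 else 0) = (b : ℕ) := by
    rw [← Finset.card_filter, Finset.filter_gt_eq_Iio, Fin.card_Iio]
  simp only [Fintype.card_subtype, Finset.card_filter, Fintype.sum_prod_type_right, hbelow]
  rw [Fin.sum_univ_eq_sum_range (fun b => b), Finset.sum_range_id]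

theorem finrank_unitriangularRowSpan_le (f : Fin k → Fin d) :
    Module.finrank ℂ (unitriangularRowSpan f) ≤ (k + 1) ^ (d * (d - 1) / 2) := by
  let exponent (w : Fin k → Fin d) (p : {p : Fin d × Fin d // p.1 < p.2}) : Fin (k + 1) :=
    ⟨fiberCard (fun j => (f j, w j)) p.1,
      Nat.lt_succ_of_le ((fiberCard_le _ _).trans_eq (Fintype.card_fin k))⟩
  let indicator (n : {p : Fin d × Fin d // p.1 < p.2} → Fin (k + 1)) (w : Fin k → Fin d) : ℂ :=
    if f ≤ w ∧ exponent w = n then 1 else 0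
  have hexpand {U : Matrix (Fin d) (Fin d) ℂ} (hU : IsUpperUnitriangular U) :
      (tensorPow d k U).row f = ∑ n, (∏ p, U p.1.1 p.1.2 ^ (n p : ℕ)) • indicator n := by
    ext w
    simp [tensorPow_apply_of_isUpperUnitriangular hU, indicator, exponent, ite_and]
  have hle : unitriangularRowSpan f ≤ Submodule.span ℂ (Set.range indicator) := by
    refine Submodule.span_le.mpr ?_
    rintro _ ⟨U, hU, rfl⟩
    rw [hexpand hU]
    exact Submodule.sum_mem _ fun n _ =>
      Submodule.smul_mem _ _ (Submodule.subset_span (Set.mem_range_self n))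
  refine (Submodule.finrank_mono hle).trans ((finrank_range_le_card _).trans_eq ?_)
  rw [Fintype.card_fun, card_lt_pairs, Fintype.card_fin]

theorem alternator_mulVec_tensorPow_row_mem (h : IsYoungTableau row col)
    (x : Matrix (Fin d) (Fin d) ℂ) :
    alternator d col *ᵥ (tensorPow d k x).row row ∈
      (unitriangularRowSpan row).map (alternator d col).mulVecLin := by
  have hcont : Continuous fun x : Matrix (Fin d) (Fin d) ℂ =>
      alternator d col *ᵥ (tensorPow d k x).row row :=
    continuous_const.matrix_mulVec
      ((continuous_apply row).comp (continuous_tensorPow (d := d) (k := k)))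
  refine dense_lowerUpperProducts.induction ?_
    ((Submodule.closed_of_finiteDimensional _).preimage hcont) x
  rintro _ ⟨L, U, hL, hU, rfl⟩
  rw [alternator_mulVec_tensorPow_lower_mul_row h hL]
  exact Submodule.smul_mem _ _ (Submodule.mem_map_of_mem (Submodule.subset_span ⟨U, hU, rfl⟩))

/-- Polarization: `exponent w` is the multidegree, in the entries of `x`, of the `w`-coordinate of
`(tensorPow d k x).row f`. -/
theorem symmetrizer_mulVec_mem_span (f : Fin k → Fin d) (z : (Fin k → Fin d) → ℂ) :
    symmetrizer d f *ᵥ z ∈ Submodule.span ℂ (Set.range fun x => (tensorPow d k x).row f) := by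
  let exponent (w : Fin k → Fin d) : Fin d × Fin d → ℕ := fiberCard fun j => (f j, w j)
  have hconst (w w' : Fin k → Fin d) (h : exponent w = exponent w') :
      (symmetrizer d f *ᵥ z) w = (symmetrizer d f *ᵥ z) w' := by
    obtain ⟨e, he⟩ := exists_perm_comp_eq_of_fiberCard_eq h
    have hf : e ∈ fiberPerms f := fun j => congrArg Prod.fst (congrFun he j)
    have hw : w' ∘ e = w := funext fun j => congrArg Prod.snd (congrFun he j)
    rw [← hw, ← permMat_mulVec_apply e (symmetrizer d f *ᵥ z), mulVec_mulVec,
      permMat_mul_symmetrizer hf]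
  refine Submodule.span_mono ?_ (mem_span_range_prod_pow exponent hconst)
  rintro _ ⟨y, rfl⟩
  exact ⟨Matrix.of fun a b => y (a, b), funext fun w =>
    prod_comp_eq_prod_pow_fiberCard y fun j => (f j, w j)⟩

theorem finrank_range_alternator_mul_symmetrizer_le (h : IsYoungTableau row col) :
    Module.finrank ℂ (alternator d col * symmetrizer d row).mulVecLin.range ≤
      (k + 1) ^ (d * (d - 1) / 2) := by
  have hspan : Submodule.span ℂ (Set.range fun x => (tensorPow d k x).row row) ≤
      ((unitriangularRowSpan row).map (alternator d col).mulVecLin).comap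
        (alternator d col).mulVecLin := by
    refine Submodule.span_le.mpr ?_
    rintro _ ⟨x, rfl⟩
    exact alternator_mulVec_tensorPow_row_mem h x
  have hrange : (alternator d col * symmetrizer d row).mulVecLin.range ≤
      (unitriangularRowSpan row).map (alternator d col).mulVecLin := by
    rintro _ ⟨z, rfl⟩
    rw [mulVecLin_mul]
    exact hspan (symmetrizer_mulVec_mem_span row z)
  exact (Submodule.finrank_mono hrange).trans
    ((Submodule.finrank_map_le _ _).trans (finrank_unitriangularRowSpan_le row))

end YoungSymmetrizer

section Orbit

variable {d k : ℕ} {κ : Type*}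

theorem exists_span_comp_eq_range {K V W : Type*} [Field K] [AddCommGroup V] [Module K V]
    [AddCommGroup W] [Module K W] [FiniteDimensional K W] (E : V →ₗ[K] W) :
    ∃ v : Fin (Module.finrank K E.range) → V, Submodule.span K (Set.range (E ∘ v)) = E.range := by
  let b := Module.finBasis K E.range
  choose v hv using fun i => (b i).2
  refine ⟨v, ?_⟩
  have hcomp : E ∘ v = E.range.subtype ∘ b := funext hv
  rw [hcomp, Set.range_comp, ← Submodule.map_span, b.span_eq, Submodule.map_subtype_top]

theorem permMat_mul_symmetrizer_eq_of_comp_eq {f : Fin k → κ} {π σ : Equiv.Perm (Fin k)}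
    (h : f ∘ ⇑π⁻¹ = f ∘ ⇑σ⁻¹) :
    permMat d k π * symmetrizer d f = permMat d k σ * symmetrizer d f := by
  have hfiber : σ⁻¹ * π ∈ fiberPerms f := fun j => by
    simpa using (congrFun h (π j)).symm
  rw [← permMat_mul_symmetrizer (τ := σ⁻¹ * π) hfiber, ← mul_assoc (permMat d k σ), ← permMat_mul,
    mul_inv_cancel_left, permMat_mul_symmetrizer hfiber]

/-- The span of the translates of the image of the Young symmetrizer of a tableau under the
permutations of the tensor factors. -/
def youngOrbitSpan (row : Fin k → Fin d) (col : Fin k → κ) :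
    Submodule ℂ ((Fin k → Fin d) → ℂ) :=
  Submodule.span ℂ {x | ∃ π v, permMat d k π *ᵥ (alternator d col * symmetrizer d row) *ᵥ v = x}

theorem permMat_mulVec_alternator_mulVec_mem {S : Submodule ℂ ((Fin k → Fin d) → ℂ)}
    {x : (Fin k → Fin d) → ℂ} (h : ∀ π, permMat d k π *ᵥ x ∈ S) (π : Equiv.Perm (Fin k))
    (c : Fin k → κ) : permMat d k π *ᵥ alternator d c *ᵥ x ∈ S := by
  simp only [alternator, sum_mulVec, smul_mulVec, mulVec_sum, mulVec_smul, mulVec_mulVec,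
    ← permMat_mul]
  exact Submodule.sum_mem _ fun σ _ => Submodule.smul_mem _ _ (h (π * σ))

/-- On the image of the row symmetrizer, `π` acts only through the word `row ∘ π⁻¹`. -/
theorem finrank_youngOrbitSpan_le (row : Fin k → Fin d) (col : Fin k → κ) :
    Module.finrank ℂ (youngOrbitSpan row col) ≤
      Module.finrank ℂ (alternator d col * symmetrizer d row).mulVecLin.range *
        #(rearrangements row) := by
  obtain ⟨v, hv⟩ := exists_span_comp_eq_range (alternator d col * symmetrizer d row).mulVecLin
  have hperm (g : rearrangements row) : ∃ σ : Equiv.Perm (Fin k), row ∘ σ = g :=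
    exists_perm_comp_eq_of_fiberCard_eq (Finset.mem_filter.mp g.2).2
  choose σ hσ using hperm
  let u : Fin _ × rearrangements row → (Fin k → Fin d) → ℂ := fun p =>
    permMat d k (σ p.2)⁻¹ *ᵥ symmetrizer d row *ᵥ v p.1
  have hmem (i) (π : Equiv.Perm (Fin k)) :
      permMat d k π *ᵥ symmetrizer d row *ᵥ v i ∈ Submodule.span ℂ (Set.range u) := by
    let g : rearrangements row := ⟨row ∘ ⇑π⁻¹, by simp [rearrangements, fiberCard_comp_perm]⟩
    have hπ : permMat d k π * symmetrizer d row = permMat d k (σ g)⁻¹ * symmetrizer d row :=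
      permMat_mul_symmetrizer_eq_of_comp_eq (by rw [inv_inv]; exact (hσ g).symm)
    rw [mulVec_mulVec, hπ, ← mulVec_mulVec]
    exact Submodule.subset_span ⟨(i, g), rfl⟩
  have hle : youngOrbitSpan row col ≤ Submodule.span ℂ (Set.range u) := by
    refine Submodule.span_le.mpr ?_
    rintro _ ⟨π, y, rfl⟩
    suffices h : (alternator d col * symmetrizer d row).mulVecLin.range ≤
        (Submodule.span ℂ (Set.range u)).comap (permMat d k π).mulVecLin from h ⟨y, rfl⟩
    refine hv.ge.trans (Submodule.span_le.mpr ?_)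
    rintro _ ⟨i, rfl⟩
    have htranslate := permMat_mulVec_alternator_mulVec_mem (hmem i) π col
    simpa only [SetLike.mem_coe, Submodule.mem_comap, Function.comp_apply, mulVecLin_apply,
      mulVec_mulVec] using htranslate
  refine (Submodule.finrank_mono hle).trans ((finrank_range_le_card _).trans_eq ?_)
  rw [Fintype.card_prod, Fintype.card_fin, Fintype.card_coe]

theorem youngOrbitSpan_comp_le (row : Fin k → Fin d) (col : Fin k → κ) (e : Equiv.Perm (Fin k)) :
    youngOrbitSpan (row ∘ e) (col ∘ e) ≤ youngOrbitSpan row col := by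
  refine Submodule.span_le.mpr ?_
  rintro _ ⟨π, v, rfl⟩
  refine Submodule.subset_span ⟨π * e⁻¹, permMat d k e *ᵥ v, ?_⟩
  have hcancel : permMat d k e * permMat d k e⁻¹ = 1 := by
    rw [← permMat_mul, mul_inv_cancel, permMat_one]
  simp only [alternator_comp, symmetrizer_comp, permMat_mul, mulVec_mulVec, mul_assoc]
  rw [← mul_assoc (permMat d k e) (permMat d k e⁻¹), hcancel, one_mul]

end Orbit

section Weights

theorem prod_le_prod_of_isLowerSet {α R : Type*} [LinearOrder α] [CommSemiring R] [PartialOrder R]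
    [IsOrderedRing R] {r : α → R} (hr : Antitone r) (hr0 : ∀ a, 0 ≤ r a) {s l : Finset α}
    (hcard : #s = #l) (hl : IsLowerSet (l : Set α)) : ∏ a ∈ s, r a ≤ ∏ a ∈ l, r a := by
  have hle (a : ↥(s \ l)) (b : ↥(l \ s)) : r a ≤ r b := by
    refine hr (le_of_not_ge fun hab => ?_)
    exact (Finset.mem_sdiff.mp a.2).2 (hl hab (Finset.mem_sdiff.mp b.2).1)
  let e := Finset.equivOfCardEq (Finset.card_sdiff_comm hcard)
  rw [← Finset.prod_inter_mul_prod_sdiff s l, ← Finset.prod_inter_mul_prod_sdiff l s,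
    Finset.inter_comm l s]
  refine mul_le_mul_of_nonneg_left ?_ (Finset.prod_nonneg fun a _ => hr0 a)
  rw [← Finset.prod_coe_sort (s \ l), ← Finset.prod_coe_sort (l \ s), ← Equiv.prod_comp e]
  exact Finset.prod_le_prod (fun a _ => hr0 a) fun a _ => hle a (e a)

/-- Each column of `row` is a lower set, so it carries the largest values of `r`. -/
theorem IsYoungTableau.prod_le_prod {ι α κ R : Type*} [Fintype ι] [LinearOrder α] [CommSemiring R]
    [PartialOrder R] [IsOrderedRing R] {row : ι → α} {col : ι → κ} (h : IsYoungTableau row col)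
    {r : α → R} (hr : Antitone r) (hr0 : ∀ a, 0 ≤ r a) {v : ι → α}
    (hv : Function.Injective fun j => (v j, col j)) : ∏ j, r (v j) ≤ ∏ j, r (row j) := by
  have hcol (j : ι) (_ : j ∈ univ) : col j ∈ univ.image col :=
    Finset.mem_image_of_mem _ (Finset.mem_univ j)
  have hinj {f : ι → α} (hf : Function.Injective fun j => (f j, col j)) (c : κ) :
      Set.InjOn f ({j | col j = c} : Finset ι) := fun a ha b hb hab =>
    hf (Prod.ext hab ((Finset.mem_filter.mp ha).2.trans (Finset.mem_filter.mp hb).2.symm))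
  rw [← Finset.prod_fiberwise_of_maps_to hcol, ← Finset.prod_fiberwise_of_maps_to hcol]
  refine Finset.prod_le_prod (fun c _ => Finset.prod_nonneg fun j _ => hr0 _) fun c _ => ?_
  rw [← Finset.prod_image (f := r) (hinj hv c), ← Finset.prod_image (f := r) (hinj h.injective c)]
  refine prod_le_prod_of_isLowerSet hr hr0 ?_ ?_
  · rw [Finset.card_image_of_injOn (hinj hv c), Finset.card_image_of_injOn (hinj h.injective c)]
  · intro a b hba ha
    obtain ⟨j, hj, rfl⟩ := Finset.mem_image.mp ha
    obtain rfl | hlt := hba.eq_or_lt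
    · exact ha
    obtain ⟨j', rfl, hcol'⟩ := h.exists_row_eq j b hlt
    refine Finset.mem_image_of_mem _ (Finset.mem_filter.mpr ⟨Finset.mem_univ _, ?_⟩)
    exact hcol'.trans (Finset.mem_filter.mp hj).2

end Weights

section Isotypic

variable {d k : ℕ} {lam : Fin d → ℕ}

/-- The row lengths `lam` of a Young diagram with at most `d` rows, continued by zeros: the encoding
of shapes used by `youngCells` and `isotypic`. -/
def zeroExtend (lam : Fin d → ℕ) (i : ℕ) : ℕ := if h : i < d then lam ⟨i, h⟩ else 0

theorem mk_mem_youngCells_zeroExtend (i : Fin d) (c : ℕ) :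
    ((i : ℕ), c) ∈ youngCells d k (zeroExtend lam) ↔ c < k ∧ c < lam i := by
  rw [youngCells, Finset.mem_filter]
  simp [zeroExtend]

theorem exists_row_col_of_mapsTo {t : Fin k → ℕ × ℕ} {lam : ℕ → ℕ}
    (ht : Set.MapsTo t Set.univ (youngCells d k lam)) :
    ∃ (row : Fin k → Fin d) (col : Fin k → ℕ), t = fun j => ((row j : ℕ), col j) := by
  have hlt (j : Fin k) : (t j).1 < d :=
    Finset.mem_range.mp (Finset.mem_product.mp (Finset.mem_filter.mp (ht (Set.mem_univ j))).1).1
  exact ⟨fun j => ⟨(t j).1, hlt j⟩, fun j => (t j).2, rfl⟩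

section Tableau

variable {row : Fin k → Fin d} {col : Fin k → ℕ}

theorem isYoungTableau_of_bijOn (hlam : Antitone lam)
    (ht : Set.BijOn (fun j => ((row j : ℕ), col j)) Set.univ (youngCells d k (zeroExtend lam))) :
    IsYoungTableau row col where
  injective a b hab := by
    obtain ⟨hrow, hcol⟩ := Prod.mk.inj hab
    exact ht.injOn (Set.mem_univ a) (Set.mem_univ b) (Prod.ext (congrArg Fin.val hrow) hcol)
  exists_row_eq j m hm := by
    obtain ⟨hk, hj⟩ := (mk_mem_youngCells_zeroExtend _ _).mp (ht.mapsTo (Set.mem_univ j))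
    obtain ⟨j', -, hj'⟩ := ht.surjOn
      ((mk_mem_youngCells_zeroExtend m _).mpr ⟨hk, hj.trans_le (hlam hm.le)⟩)
    obtain ⟨hrow, hcol⟩ := Prod.mk.inj hj'
    exact ⟨j', Fin.ext hrow, hcol⟩

theorem fiberCard_eq_of_bijOn (hlam : ∀ i, lam i ≤ k)
    (ht : Set.BijOn (fun j => ((row j : ℕ), col j)) Set.univ (youngCells d k (zeroExtend lam))) :
    fiberCard row = lam := by
  ext i
  rw [← Finset.card_range (lam i)]
  refine Finset.card_bij (fun j _ => col j) ?_ ?_ ?_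
  · intro j hj
    obtain rfl : row j = i := by simpa using hj
    exact Finset.mem_range.mpr
      ((mk_mem_youngCells_zeroExtend _ _).mp (ht.mapsTo (Set.mem_univ j))).2
  · intro a ha b hb hab
    have hrow : row a = row b := by simp_all
    exact ht.injOn (Set.mem_univ a) (Set.mem_univ b) (Prod.ext (congrArg Fin.val hrow) hab)
  · intro c hc
    have hc' := Finset.mem_range.mp hc
    obtain ⟨j, -, hj⟩ := ht.surjOn
      ((mk_mem_youngCells_zeroExtend i c).mpr ⟨hc'.trans_le (hlam i), hc'⟩)
    obtain ⟨hrow, hcol⟩ := Prod.mk.inj hj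
    exact ⟨j, by simp [Fin.ext hrow], hcol⟩

end Tableau

theorem exists_perm_comp_eq_of_bijOn {ι α : Type*} {f g : ι → α} {s : Set α}
    (hf : Set.BijOn f Set.univ s) (hg : Set.BijOn g Set.univ s) :
    ∃ e : Equiv.Perm ι, g ∘ e = f := by
  let label {h : ι → α} (hh : Set.BijOn h Set.univ s) : ι ≃ s :=
    (Equiv.Set.univ ι).symm.trans (hh.equiv h)
  refine ⟨(label hf).trans (label hg).symm, funext fun j => ?_⟩
  exact congrArg Subtype.val ((label hg).apply_symm_apply (label hf j))

theorem isotypic_le_youngOrbitSpan {row : Fin k → Fin d} {col : Fin k → ℕ} {lam : ℕ → ℕ}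
    (ht : Set.BijOn (fun j => ((row j : ℕ), col j)) Set.univ (youngCells d k lam)) :
    isotypic d k lam ≤ youngOrbitSpan row col := by
  refine Submodule.span_le.mpr ?_
  rintro _ ⟨t', ht', π, v, rfl⟩
  obtain ⟨row', col', rfl⟩ := exists_row_col_of_mapsTo ht'.mapsTo
  obtain ⟨e, he⟩ := exists_perm_comp_eq_of_bijOn ht' ht
  have hrow : row ∘ e = row' := funext fun j => Fin.ext (congrArg Prod.fst (congrFun he j))
  have hcol : col ∘ e = col' := funext fun j => congrArg Prod.snd (congrFun he j)
  refine youngOrbitSpan_comp_le row col e (Submodule.subset_span ⟨π, v, ?_⟩)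
  rw [hrow, hcol, youngSymMat_eq_alternator_mul_symmetrizer]

theorem finrank_isotypic_mul_prod_le (hlam : Antitone lam) (hlam_le : ∀ i, lam i ≤ k)
    {q : Fin d → ℝ} (hq : ∀ i, 0 ≤ q i) (hq_sum : ∑ i, q i = 1) :
    Module.finrank ℂ (isotypic d k (zeroExtend lam)) * ∏ i, q i ^ lam i ≤
      ((k + 1) ^ (d * (d - 1) / 2) : ℝ) := by
  by_cases hex : ∃ t : Fin k → ℕ × ℕ, Set.BijOn t Set.univ (youngCells d k (zeroExtend lam))
  · obtain ⟨t, ht⟩ := hex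
    obtain ⟨row, col, rfl⟩ := exists_row_col_of_mapsTo ht.mapsTo
    have hdim : Module.finrank ℂ (isotypic d k (zeroExtend lam)) ≤
        (k + 1) ^ (d * (d - 1) / 2) * #(rearrangements row) :=
      (Submodule.finrank_mono (isotypic_le_youngOrbitSpan ht)).trans <|
        (finrank_youngOrbitSpan_le row col).trans <| Nat.mul_le_mul_right _ <|
          finrank_range_alternator_mul_symmetrizer_le (isYoungTableau_of_bijOn hlam ht)
    have hprod : ∏ j, q (row j) = ∏ i, q i ^ lam i := by
      rw [prod_comp_eq_prod_pow_fiberCard, fiberCard_eq_of_bijOn hlam_le ht]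
    rw [← hprod]
    calc (Module.finrank ℂ (isotypic d k (zeroExtend lam)) : ℝ) * ∏ j, q (row j)
      _ ≤ (k + 1) ^ (d * (d - 1) / 2) * #(rearrangements row) * ∏ j, q (row j) :=
        mul_le_mul_of_nonneg_right (mod_cast hdim) (Finset.prod_nonneg fun j _ => hq _)
      _ = (k + 1) ^ (d * (d - 1) / 2) * (#(rearrangements row) * ∏ j, q (row j)) := mul_assoc ..
      _ ≤ (k + 1) ^ (d * (d - 1) / 2) := mul_le_of_le_one_right (by positivity)
        (card_rearrangements_mul_prod_le_one row hq hq_sum)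
  · have hbot : isotypic d k (zeroExtend lam) = ⊥ := by
      refine Submodule.span_eq_bot.mpr ?_
      rintro _ ⟨t, ht, -⟩
      exact absurd ⟨t, ht⟩ hex
    rw [hbot, finrank_bot, Nat.cast_zero, zero_mul]
    positivity

/-- The highest weight of the component is `lam`. -/
theorem prod_le_of_mem_isotypic (hlam : Antitone lam) (hlam_le : ∀ i, lam i ≤ k) {r : Fin d → ℝ}
    (hr : Antitone r) (hr0 : ∀ i, 0 ≤ r i) {x : (Fin k → Fin d) → ℂ}
    (hx : x ∈ isotypic d k (zeroExtend lam)) {v : Fin k → Fin d} (hxv : x v ≠ 0) :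
    ∏ j, r (v j) ≤ ∏ i, r i ^ lam i := by
  by_contra hlt
  suffices h : isotypic d k (zeroExtend lam) ≤ LinearMap.ker (LinearMap.proj v) from hxv (h hx)
  refine Submodule.span_le.mpr ?_
  rintro _ ⟨t, ht, π, y, rfl⟩
  obtain ⟨row, col, rfl⟩ := exists_row_col_of_mapsTo ht.mapsTo
  change (permMat d k π *ᵥ youngSymMat d k _ *ᵥ y) v = 0
  rw [permMat_mulVec_apply, youngSymMat_eq_alternator_mul_symmetrizer, ← mulVec_mulVec]
  refine alternator_mulVec_apply_eq_zero (fun hv => hlt ?_) _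
  have hweight := (isYoungTableau_of_bijOn hlam ht).prod_le_prod hr hr0 hv
  rwa [prod_comp_eq_prod_pow_fiberCard r row, fiberCard_eq_of_bijOn hlam_le ht,
    Function.comp_def, Equiv.prod_comp π fun j => r (v j)] at hweight

theorem tensorPow_mulVec_mem_isotypic (A : Matrix (Fin d) (Fin d) ℂ) {lam : ℕ → ℕ}
    {x : (Fin k → Fin d) → ℂ} (hx : x ∈ isotypic d k lam) :
    tensorPow d k A *ᵥ x ∈ isotypic d k lam := by
  suffices h : isotypic d k lam ≤ (isotypic d k lam).comap (tensorPow d k A).mulVecLin from h hx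
  refine Submodule.span_le.mpr ?_
  rintro _ ⟨t, ht, π, y, rfl⟩
  refine Submodule.subset_span ⟨t, ht, π, tensorPow d k A *ᵥ y, ?_⟩
  have hcomm := (commute_tensorPow_permMat A π).mul_right (commute_tensorPow_youngSymMat A t)
  simpa only [mulVecLin_apply, mulVec_mulVec, mul_assoc] using congrArg (· *ᵥ y) hcomm.eq

end Isotypic

section Divergence

variable {ι : Type*} [Fintype ι]

/-- The Kullback–Leibler divergence `D(p‖q)` of weights on a finite type. The convention
`log 0 = 0` gives the usual value when `p i = 0`, but a finite value when `q i = 0 < p i`. -/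
def klDivergence (p q : ι → ℝ) : ℝ := ∑ i, p i * (Real.log (p i) - Real.log (q i))

theorem klDivergence_div_eq_sum_ite (n : ι → ℕ) (k : ℝ) (q : ι → ℝ) :
    klDivergence (fun i => n i / k) q = ∑ i, if n i = 0 then 0 else
      n i / k * (Real.log (n i / k) - Real.log (q i)) :=
  Finset.sum_congr rfl fun i _ => by split_ifs with h <;> simp [h]

theorem prod_pow_le_mul_exp_neg_klDivergence {k : ℝ} (hk : 0 < k) (n : ι → ℕ) {r : ι → ℝ}
    (hr : ∀ i, 0 ≤ r i) :
    ∏ i, r i ^ n i ≤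
      (∏ i, (n i / k) ^ n i) * Real.exp (-k * klDivergence (fun i => n i / k) r) := by
  rw [klDivergence, Finset.mul_sum, Real.exp_sum, ← Finset.prod_mul_distrib]
  refine Finset.prod_le_prod (fun i _ => pow_nonneg (hr i) _) fun i _ => ?_
  obtain hn | hn := (n i).eq_zero_or_pos
  · simp [hn]
  obtain h0 | hpos := (hr i).eq_or_lt
  · rw [← h0, zero_pow hn.ne']
    positivity
  have hq : 0 < n i / k := by positivity
  have hexponent : -k * (n i / k * (Real.log (n i / k) - Real.log (r i))) =
      n i * (Real.log (r i) - Real.log (n i / k)) := by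
    field_simp
    ring
  rw [hexponent, Real.exp_nat_mul, Real.exp_sub, Real.exp_log hpos, Real.exp_log hq, ← mul_pow,
    mul_div_cancel₀ _ hq.ne']

end Divergence

section Trace

variable {n : Type*} [Fintype n]

theorem trace_eq_finrank_range_of_isIdempotentElem {K : Type*} [Field K] {Q : Matrix n n K}
    (hQ : IsIdempotentElem Q) :
    Q.trace = Module.finrank K (LinearMap.range Q.mulVecLin) := by
  classical
  have hlin : IsIdempotentElem Q.toLin' := hQ.map (toLinAlgEquiv' (R := K) (n := n))
  rw [← trace_toLin'_eq, ← toLin'_apply']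
  exact (LinearMap.IsIdempotentElem.isProj_range _ hlin).trace

theorem trace_mul_diagonal_re_le [DecidableEq n] {Q : Matrix n n ℂ} (hQ : IsStarProjection Q)
    {W : Submodule ℂ (n → ℂ)} (hQW : LinearMap.range Q.mulVecLin ≤ W) {g : n → ℝ} {R : ℝ}
    (hR : 0 ≤ R) (hg : ∀ x ∈ W, ∀ v, x v ≠ 0 → g v ≤ R) :
    (Q * diagonal fun v => (g v : ℂ)).trace.re ≤ R * Module.finrank ℂ W := by
  have hdiag (v : n) : 0 ≤ (Q v v).re := by
    have hpos := (posSemidef_conjTranspose_mul_self Q).diag_nonneg (i := v)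
    rw [← star_eq_conjTranspose, hQ.isSelfAdjoint.star_eq, hQ.isIdempotentElem.eq] at hpos
    exact (Complex.le_def.mp hpos).1
  have hterm (v : n) : (Q v v).re * g v ≤ R * (Q v v).re := by
    by_cases hv : Q v v = 0
    · simp [hv]
    rw [mul_comm R]
    refine mul_le_mul_of_nonneg_left (hg _ (hQW ⟨Pi.single v 1, rfl⟩) v ?_) (hdiag v)
    simpa using hv
  calc (Q * diagonal fun v => (g v : ℂ)).trace.re
    _ = ∑ v, (Q v v).re * g v := by simp [trace, Complex.re_sum]
    _ ≤ ∑ v, R * (Q v v).re := Finset.sum_le_sum fun v _ => hterm v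
    _ = R * Q.trace.re := by simp [trace, Complex.re_sum, Finset.mul_sum]
    _ = R * Module.finrank ℂ (LinearMap.range Q.mulVecLin) := by
      rw [trace_eq_finrank_range_of_isIdempotentElem hQ.isIdempotentElem, Complex.natCast_re]
    _ ≤ R * Module.finrank ℂ W :=
      mul_le_mul_of_nonneg_left (mod_cast Submodule.finrank_mono hQW) hR

end Trace

section KeylWerner

variable {d k : ℕ}

theorem exists_mem_unitaryGroup_eq_mul_diagonal_mul {𝕜 n : Type*} [RCLike 𝕜] [Fintype n]
    [DecidableEq n] {A : Matrix n n 𝕜} (hA : A.IsHermitian) (σ : Equiv.Perm n) :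
    ∃ U ∈ unitaryGroup n 𝕜, A = U * diagonal (fun i => (hA.eigenvalues (σ i) : 𝕜)) * Uᴴ := by
  let V : Matrix n n 𝕜 := hA.eigenvectorUnitary
  have hV : V * Vᴴ = 1 := mem_unitaryGroup_iff.mp hA.eigenvectorUnitary.2
  refine ⟨V.submatrix id σ, mem_unitaryGroup_iff.mpr ?_, ?_⟩
  · rw [star_eq_conjTranspose, conjTranspose_submatrix, submatrix_mul_equiv, hV, submatrix_id_id]
  · have hdiag : diagonal (fun i => (hA.eigenvalues (σ i) : 𝕜)) =
        (diagonal fun i => (hA.eigenvalues i : 𝕜)).submatrix σ σ :=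
      (submatrix_diagonal_equiv (fun i => (hA.eigenvalues i : 𝕜)) σ).symm
    rw [hdiag, conjTranspose_submatrix, submatrix_mul_equiv, submatrix_mul_equiv, submatrix_id_id]
    exact hA.spectral_theorem.trans (Unitary.conjStarAlgAut_apply ..)

theorem tensorPow_mem_unitaryGroup {U : Matrix (Fin d) (Fin d) ℂ}
    (hU : U ∈ unitaryGroup (Fin d) ℂ) : tensorPow d k U ∈ unitaryGroup (Fin k → Fin d) ℂ := by
  rw [mem_unitaryGroup_iff, star_eq_conjTranspose, conjTranspose_tensorPow, ← tensorPow_mul,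
    ← star_eq_conjTranspose, mem_unitaryGroup_iff.mp hU, tensorPow_one]

theorem isStarProjection_star_mul_mul {R : Type*} [Monoid R] [StarMul R] {p u : R}
    (hp : IsStarProjection p) (hu : u ∈ unitary R) : IsStarProjection (star u * p * u) where
  isIdempotentElem := by
    calc star u * p * u * (star u * p * u)
      _ = star u * p * (u * star u) * p * u := by simp only [mul_assoc]
      _ = star u * (p * p) * u := by
        rw [Unitary.mul_star_self_of_mem hu, mul_one, mul_assoc (star u)]
      _ = star u * p * u := by rw [hp.isIdempotentElem.eq]
  isSelfAdjoint := hp.isSelfAdjoint.conjugate' u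

theorem trace_mul_tensorPow_re_le {lam : Fin d → ℕ} (hlam : Antitone lam) (hlam_le : ∀ i, lam i ≤ k)
    {A : Matrix (Fin d) (Fin d) ℂ} (hA : A.PosSemidef) {σ : Equiv.Perm (Fin d)}
    (hσ : Antitone (hA.1.eigenvalues ∘ σ)) {Q : Matrix (Fin k → Fin d) (Fin k → Fin d) ℂ}
    (hQ : IsStarProjection Q)
    (hQ_range : LinearMap.range Q.mulVecLin ≤ isotypic d k (zeroExtend lam)) :
    (Q * tensorPow d k A).trace.re ≤ (∏ i, hA.1.eigenvalues (σ i) ^ lam i) *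
      Module.finrank ℂ (isotypic d k (zeroExtend lam)) := by
  obtain ⟨U, hU, hAU⟩ := exists_mem_unitaryGroup_eq_mul_diagonal_mul hA.1 σ
  have hr0 (i : Fin d) : 0 ≤ hA.1.eigenvalues (σ i) := hA.eigenvalues_nonneg _
  set T := tensorPow d k U
  have hconj_range :
      LinearMap.range (star T * Q * T).mulVecLin ≤ isotypic d k (zeroExtend lam) := by
    rintro _ ⟨y, rfl⟩
    rw [mulVecLin_apply, ← mulVec_mulVec, ← mulVec_mulVec, star_eq_conjTranspose,
      conjTranspose_tensorPow]
    exact tensorPow_mulVec_mem_isotypic _ (hQ_range ⟨_, rfl⟩)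
  have htrace : (Q * tensorPow d k A).trace = (star T * Q * T *
      diagonal fun v : Fin k → Fin d => ((∏ j, hA.1.eigenvalues (σ (v j)) : ℝ) : ℂ)).trace := by
    conv_lhs => rw [hAU]
    rw [tensorPow_mul, tensorPow_mul, ← conjTranspose_tensorPow, tensorPow_diagonal, ← mul_assoc,
      trace_mul_comm, star_eq_conjTranspose]
    simp only [T, mul_assoc, Complex.ofReal_prod, Complex.coe_algebraMap]
  rw [htrace]
  exact trace_mul_diagonal_re_le
    (isStarProjection_star_mul_mul hQ (tensorPow_mem_unitaryGroup hU)) hconj_range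
    (Finset.prod_nonneg fun i _ => pow_nonneg (hr0 i) _)
    fun x hx v hxv => prod_le_of_mem_isotypic hlam hlam_le hσ hr0 hx hxv

theorem trace_mul_tensorPow_re_le_exp_neg_klDivergence (hk : 0 < k) {lam : Fin d → ℕ}
    (hlam : Antitone lam) (hlam_sum : ∑ i, lam i = k) {A : Matrix (Fin d) (Fin d) ℂ}
    (hA : A.PosSemidef) {σ : Equiv.Perm (Fin d)} (hσ : Antitone (hA.1.eigenvalues ∘ σ))
    {Q : Matrix (Fin k → Fin d) (Fin k → Fin d) ℂ} (hQ : IsStarProjection Q)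
    (hQ_range : LinearMap.range Q.mulVecLin ≤ isotypic d k (zeroExtend lam)) :
    (Q * tensorPow d k A).trace.re ≤ (k + 1) ^ (d * (d - 1) / 2) *
      Real.exp (-k * klDivergence (fun i => lam i / k) (hA.1.eigenvalues ∘ σ)) := by
  have hk' : (0 : ℝ) < k := mod_cast hk
  have hlam_le (i : Fin d) : lam i ≤ k :=
    hlam_sum ▸ Finset.single_le_sum (fun _ _ => Nat.zero_le _) (Finset.mem_univ i)
  have hq_sum : ∑ i, (lam i / k : ℝ) = 1 := by
    rw [← Finset.sum_div, div_eq_one_iff_eq hk'.ne']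
    exact mod_cast hlam_sum
  set f := (Module.finrank ℂ (isotypic d k (zeroExtend lam)) : ℝ)
  set D := klDivergence (fun i => lam i / k) (hA.1.eigenvalues ∘ σ)
  calc (Q * tensorPow d k A).trace.re
    _ ≤ (∏ i, hA.1.eigenvalues (σ i) ^ lam i) * f :=
      trace_mul_tensorPow_re_le hlam hlam_le hA hσ hQ hQ_range
    _ ≤ ((∏ i, (lam i / k : ℝ) ^ lam i) * Real.exp (-k * D)) * f := by
      gcongr
      exact prod_pow_le_mul_exp_neg_klDivergence hk' lam fun i => hA.eigenvalues_nonneg _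
    _ = (f * ∏ i, (lam i / k : ℝ) ^ lam i) * Real.exp (-k * D) := by ring
    _ ≤ (k + 1) ^ (d * (d - 1) / 2) * Real.exp (-k * D) := by
      gcongr
      exact finrank_isotypic_mul_prod_le hlam hlam_le (fun i => by positivity) hq_sum

theorem stmt_9_general (hk : 0 < k) {ρ : Matrix (Fin d) (Fin d) ℂ} (hρ : ρ.PosSemidef)
    {r : Fin d → ℝ} (hr_anti : Antitone r)
    (hr_spec : ∃ σ : Equiv.Perm (Fin d), ∀ i, r i = hρ.1.eigenvalues (σ i))
    {Λ : Finset (Fin d → Fin (k + 1))} (hΛ_anti : ∀ lam ∈ Λ, Antitone fun i => (lam i : ℕ))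
    (hΛ_sum : ∀ lam ∈ Λ, ∑ i, (lam i : ℕ) = k)
    {P : (Fin d → Fin (k + 1)) → Matrix (Fin k → Fin d) (Fin k → Fin d) ℂ}
    (hP : ∀ lam ∈ Λ, IsStarProjection (P lam))
    (hP_range : ∀ lam ∈ Λ, LinearMap.range (P lam).mulVecLin ≤
      isotypic d k (zeroExtend fun i => lam i))
    {mKL : ℝ} (hmKL : ∀ lam ∈ Λ, mKL ≤ klDivergence (fun i => (lam i : ℝ) / k) r) :
    ((∑ lam ∈ Λ, P lam) * tensorPow d k ρ).trace.re ≤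
      (k + 1) ^ (d * (d + 1) / 2) * Real.exp (-(k : ℝ) * mKL) := by
  obtain ⟨σ, hσ⟩ := hr_spec
  obtain rfl : r = hρ.1.eigenvalues ∘ σ := funext hσ
  have hterm (lam : Fin d → Fin (k + 1)) (hlam : lam ∈ Λ) : (P lam * tensorPow d k ρ).trace.re ≤
      (k + 1) ^ (d * (d - 1) / 2) * Real.exp (-k * mKL) := by
    refine (trace_mul_tensorPow_re_le_exp_neg_klDivergence hk (hΛ_anti lam hlam) (hΛ_sum lam hlam)
      hρ hr_anti (hP lam hlam) (hP_range lam hlam)).trans ?_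
    gcongr ?_ * Real.exp ?_
    exact mul_le_mul_of_nonpos_left (hmKL lam hlam) (by simp)
  have hcard : (#Λ : ℝ) ≤ (k + 1) ^ d := by
    simpa using (Nat.cast_le (α := ℝ)).mpr (Finset.card_le_univ Λ)
  calc ((∑ lam ∈ Λ, P lam) * tensorPow d k ρ).trace.re
    _ = ∑ lam ∈ Λ, (P lam * tensorPow d k ρ).trace.re := by
      rw [Finset.sum_mul, trace_sum, Complex.re_sum]
    _ ≤ #Λ * ((k + 1) ^ (d * (d - 1) / 2) * Real.exp (-k * mKL)) := by
      simpa only [nsmul_eq_mul] using Finset.sum_le_card_nsmul _ _ _ hterm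
    _ ≤ (k + 1) ^ d * ((k + 1) ^ (d * (d - 1) / 2) * Real.exp (-k * mKL)) := by gcongr
    _ = (k + 1) ^ (d * (d + 1) / 2) * Real.exp (-k * mKL) := by
      rw [← mul_assoc, ← pow_add, add_comm d, ← Nat.triangle_succ, Nat.add_sub_cancel, mul_comm d]

end KeylWerner

/-- Corollary of the Keyl–Werner estimate: if `S` is a closed set of probability vectors not
containing the spectrum `r` of the density operator `ρ`, and `P_X` is the sum of the Schur–Weyl
projectors `P_lam` over partitions `lam ⊢ k` with `lam/k ∈ S`, then
`tr(P_X ρ^{⊗k}) ≤ (k+1)^{d(d+1)/2} exp(−k · min_{lam ⊢ k, lam/k ∈ S} D(lam/k ‖ r))`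
(stated for any lower bound `mKL` of the relevant KL divergences, in particular the minimum). -/
theorem stmt_9 {d k : ℕ} (hk : 0 < k)
    (ρ : Matrix (Fin d) (Fin d) ℂ) (hρ : ρ.PosSemidef) (hρtr : ρ.trace = 1)
    (r : Fin d → ℝ) (hr_anti : Antitone r)
    (hr_spec : ∃ σ : Equiv.Perm (Fin d), ∀ i, r i = hρ.1.eigenvalues (σ i))
    (S : Set (Fin d → ℝ)) (hSclosed : IsClosed S)
    (hSprob : ∀ p ∈ S, (∀ i, 0 ≤ p i) ∧ ∑ i, p i = 1) (hrS : r ∉ S)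
    (P : (Fin d → Fin (k + 1)) → Matrix (Fin k → Fin d) (Fin k → Fin d) ℂ)
    (hP : ∀ lam : Fin d → Fin (k + 1),
      Antitone (fun i => (lam i : ℕ)) → (∑ i, (lam i : ℕ)) = k →
        P lam * P lam = P lam ∧ (P lam).IsHermitian ∧
          LinearMap.range (P lam).mulVecLin =
            isotypic d k (fun i => if h : i < d then (lam ⟨i, h⟩ : ℕ) else 0))
    (mKL : ℝ)
    (hmKL : ∀ lam : Fin d → Fin (k + 1),
      Antitone (fun i => (lam i : ℕ)) → (∑ i, (lam i : ℕ)) = k →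
        (fun i => (lam i : ℝ) / k) ∈ S →
        mKL ≤ ∑ i : Fin d, (if (lam i : ℕ) = 0 then 0 else
          ((lam i : ℝ) / k) * (Real.log ((lam i : ℝ) / k) - Real.log (r i)))) :
    ((∑ lam ∈ univ.filter (fun lam : Fin d → Fin (k + 1) =>
        Antitone (fun i => (lam i : ℕ)) ∧ (∑ i, (lam i : ℕ)) = k ∧
          (fun i => (lam i : ℝ) / k) ∈ S), P lam) * tensorPow d k ρ).trace.re ≤
      (k + 1) ^ (d * (d + 1) / 2) * Real.exp (-(k : ℝ) * mKL) := by
  refine stmt_9_general hk hρ hr_anti hr_spec (fun lam hlam => ?_) (fun lam hlam => ?_)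
    (fun lam hlam => ?_) (fun lam hlam => ?_) fun lam hlam => ?_
  all_goals obtain ⟨hanti, hsum, hS⟩ := (Finset.mem_filter.mp hlam).2
  · exact hanti
  · exact hsum
  · exact ⟨(hP lam hanti hsum).1, (hP lam hanti hsum).2.1⟩
  · exact (hP lam hanti hsum).2.2.le
  · exact (hmKL lam hanti hsum hS).trans_eq (klDivergence_div_eq_sum_ite _ _ _).symm

end
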